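/- Let M be a 3-connected matroid and let C* be a 4-element cocircuit of M. If there are two distinct elements of C* neither of which is contained in a triangle of M, then there exists c ∈ C* such that M/c is 3-connected. -/

import Mathlib

open Set Matroid

variable {α β : Type*}

namespace NDP

/-- The rank of a set `X` in a matroid `M`: the largest cardinality of an
independent subset of `X` (intended for finite matroids). -/
noncomputable def rk (M : Matroid α) (X : Set α) : ℕ :=
  sSup {n : ℕ | ∃ I, M.Indep I ∧ I ⊆ X ∧ I.ncard = n}

/-- The connectivity function `λ_M(X) = r(X) + r(E − X) − r(M)`, valued in `ℤ`. -/
noncomputable def lam (M : Matroid α) (X : Set α) : ℤ :=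
  (rk M X : ℤ) + (rk M (M.E \ X) : ℤ) - (rk M M.E : ℤ)

/-- Deletion of a set of elements. -/
def delete (M : Matroid α) (D : Set α) : Matroid α := M ↾ (M.E \ D)

/-- Contraction of a set of elements, defined by duality. -/
def contract (M : Matroid α) (C : Set α) : Matroid α := (delete M✶ C)✶

/-- `X` is a `k`-separating set of `M`. -/
def Separating (M : Matroid α) (k : ℕ) (X : Set α) : Prop :=
  X ⊆ M.E ∧ lam M X ≤ (k : ℤ) - 1

/-- `X` is exactly `k`-separating in `M`. -/
def ExactlySeparating (M : Matroid α) (k : ℕ) (X : Set α) : Prop :=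
  X ⊆ M.E ∧ lam M X = (k : ℤ) - 1

/-- `(X, M.E \ X)` is a `k`-separation of `M`. -/
def IsKSeparation (M : Matroid α) (k : ℕ) (X : Set α) : Prop :=
  Separating M k X ∧ k ≤ X.ncard ∧ k ≤ (M.E \ X).ncard

/-- A matroid is connected if it has no 1-separations. -/
def Connected (M : Matroid α) : Prop := ∀ X, ¬ IsKSeparation M 1 X

/-- A matroid is 3-connected if it has no k-separations for k < 3. -/
def ThreeConnected (M : Matroid α) : Prop := ∀ k < 3, ∀ X, ¬ IsKSeparation M k X

/-- A circuit: a minimal dependent set. -/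
def Circuit (M : Matroid α) (C : Set α) : Prop :=
  C ⊆ M.E ∧ ¬ M.Indep C ∧ ∀ D, D ⊂ C → M.Indep D

def Cocircuit (M : Matroid α) (C : Set α) : Prop := Circuit M✶ C

def Triangle (M : Matroid α) (T : Set α) : Prop := Circuit M T ∧ T.ncard = 3

def Triad (M : Matroid α) (T : Set α) : Prop := Cocircuit M T ∧ T.ncard = 3

/-- `N` is a minor of `M`. -/
def Minor (N M : Matroid α) : Prop := ∃ C D, N = delete (contract M C) D

/-- `M` has a minor isomorphic to `N`. -/
def IsoMinor (M : Matroid α) (N : Matroid β) : Prop :=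
  ∃ (f : β → α) (hf : Set.InjOn f N.E), Minor (N.map f hf) M

/-- `X` is a set of representatives for the simplification of `M`:
one non-loop element from each parallel class. -/
def SimpRep (M : Matroid α) (X : Set α) : Prop :=
  X ⊆ M.E ∧ (∀ e ∈ X, M.Indep {e}) ∧
  (∀ e ∈ M.E, M.Indep {e} → ∃ f ∈ X, f ∈ M.closure {e}) ∧
  (∀ f ∈ X, ∀ g ∈ X, f ∈ M.closure {g} → f = g)

/-- `si M` (the simplification of `M`) is a 3-connected matroid. -/
def SiThreeConnected (M : Matroid α) : Prop :=
  ∀ X, SimpRep M X → ThreeConnected (M ↾ X)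

/-- `co M` (the cosimplification of `M`) is a 3-connected matroid. -/
def CoThreeConnected (M : Matroid α) : Prop := SiThreeConnected M✶

/-- The restriction of `M` to `P` is isomorphic to the rank-`r` uniform matroid on `P`. -/
def UnifRestr (M : Matroid α) (r : ℕ) (P : Set α) : Prop :=
  P ⊆ M.E ∧ ∀ X ⊆ P, (M.Indep X ↔ X.ncard ≤ r)

/-- A set is fully closed if it is closed in `M` and in `M✶`. -/
def FullClosed (M : Matroid α) (F : Set α) : Prop :=
  M.closure F = F ∧ M✶.closure F = F

/-- The full closure of `X`: the intersection of all fully closed sets containing `X`. -/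
def fcl (M : Matroid α) (X : Set α) : Set α :=
  ⋂₀ {F | X ⊆ F ∧ FullClosed M F}

/-- `(X, {z}, Y)` is a vertical 3-separation of `M`. -/
def VertThreeSep (M : Matroid α) (X : Set α) (z : α) (Y : Set α) : Prop :=
  X ∪ {z} ∪ Y = M.E ∧ Disjoint X Y ∧ z ∉ X ∧ z ∉ Y ∧
  IsKSeparation M 3 (X ∪ {z}) ∧ 3 ≤ rk M (X ∪ {z}) ∧ 3 ≤ rk M Y ∧
  IsKSeparation M 3 X ∧ 3 ≤ rk M X ∧ 3 ≤ rk M (Y ∪ {z}) ∧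
  z ∈ M.closure X ∧ z ∈ M.closure Y

/-- `M` is a wheel or a whirl: its ground set has a cyclic ordering of alternating
spokes and rims in which consecutive triples are alternately triangles and triads. -/
def IsWheelOrWhirl (M : Matroid α) : Prop :=
  ∃ (n : ℕ) (s r : ZMod n → α), 2 ≤ n ∧
    Function.Injective (fun p : ZMod n × Bool => if p.2 then s p.1 else r p.1) ∧
    Set.range s ∪ Set.range r = M.E ∧
    ∀ i : ZMod n, Triangle M {s i, r i, s (i + 1)} ∧ Triad M {r i, s (i + 1), r (i + 1)}

/-- `f` (restricted to `{0, …, k−1}`) is a fan ordering of length `k` in `M`. -/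
def IsFanOrd (M : Matroid α) (k : ℕ) (f : ℕ → α) : Prop :=
  3 ≤ k ∧ Set.InjOn f (Set.Iio k) ∧ (∀ i < k, f i ∈ M.E) ∧
  (Triangle M {f 0, f 1, f 2} ∨ Triad M {f 0, f 1, f 2}) ∧
  ∀ i, i + 3 < k →
    (Triangle M {f i, f (i+1), f (i+2)} → Triad M {f (i+1), f (i+2), f (i+3)}) ∧
    (Triad M {f i, f (i+1), f (i+2)} → Triangle M {f (i+1), f (i+2), f (i+3)})

/-- `F` is a fan of `M`. -/
def IsFan (M : Matroid α) (F : Set α) : Prop :=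
  ∃ k f, IsFanOrd M k f ∧ F = f '' Set.Iio k

/-- `F` is a maximal fan of `M`. -/
def IsMaximalFan (M : Matroid α) (F : Set α) : Prop :=
  IsFan M F ∧ ∀ F', IsFan M F' → F ⊆ F' → F' = F

end NDP

/- In a vertical 3-separation `(X, a, Y)` of a 3-connected matroid, suppose that `a` and some
`b ∈ X` lie in no triangle and that `b ∉ cl (X \ {b})`. Then `M / b` is 3-connected: otherwise `b`
has a vertical 3-separation `(X', b, Y')` with, say, `a ∈ Y'`, and uncrossing the two by
submodularity of the connectivity function leaves `X = {b, p, q}` with `p ∈ X'` and `q ∈ Y'`. Since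
`X` spans `a` but contains no two elements spanning `a`, this forces `p ∈ cl Y'`, then
`b ∈ cl (X' \ {p})`, and finally `b ∈ cl (X \ {b})`.

Suppose now that `M / a` is not 3-connected, where `a ∈ C*` is in no triangle, and take a vertical
3-separation `(X, a, Y)`. An element of `C*` is not spanned by a set avoiding `C*`, so `X` and `Y`
both meet `C*`, and one of them in a single element. If that element is the second triangle-free
element `b`, then `M / b` is 3-connected. If it is `c ≠ b`, then either `M / c` is 3-connected or
`c` is in a triangle, which by orthogonality contains the fourth element `d`; moving `d` across the
separation isolates `b`. -/

namespace NDP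

variable {M : Matroid α} {C P S T X Y X' Y' : Set α} {a b c d e f p q z : α} {k : ℕ}

section Rank

variable [M.RankFinite]

theorem coe_rk (M : Matroid α) [M.RankFinite] (X : Set α) : (rk M X : ℕ∞) = M.eRk X := by
  obtain ⟨I, hI⟩ := M.exists_isBasis' X
  have hg : IsGreatest {n : ℕ | ∃ J, M.Indep J ∧ J ⊆ X ∧ J.ncard = n} I.ncard := by
    refine ⟨⟨I, hI.indep, hI.subset, rfl⟩, ?_⟩
    rintro _ ⟨J, hJ, hJX, rfl⟩
    have hle := hJ.encard_le_eRk_of_subset hJX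
    rw [hI.eRk_eq_encard, ← hI.indep.finite.cast_ncard_eq, ← hJ.finite.cast_ncard_eq] at hle
    exact_mod_cast hle
  rw [rk, hg.csSup_eq, hI.eRk_eq_encard, hI.indep.finite.cast_ncard_eq]

theorem rk_mono (h : X ⊆ Y) : rk M X ≤ rk M Y := by
  have := M.eRk_mono h
  rw [← coe_rk, ← coe_rk] at this
  exact_mod_cast this

theorem rk_inter_add_rk_union_le (M : Matroid α) [M.RankFinite] (X Y : Set α) :
    rk M (X ∩ Y) + rk M (X ∪ Y) ≤ rk M X + rk M Y := by
  have := M.eRk_inter_add_eRk_union_le X Y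
  simp only [← coe_rk] at this
  exact_mod_cast this

theorem rk_le_ncard (hX : X.Finite) : rk M X ≤ X.ncard := by
  have := M.eRk_le_encard X
  rw [← coe_rk, ← hX.cast_ncard_eq] at this
  exact_mod_cast this

theorem rk_le_one_of_subsingleton (h : X.Subsingleton) : rk M X ≤ 1 := by
  have := (M.eRk_le_encard X).trans (encard_le_one_iff_subsingleton.2 h)
  rw [← coe_rk] at this
  exact_mod_cast this

theorem indep_of_ncard_le_rk (hX : X.Finite) (h : X.ncard ≤ rk M X) : M.Indep X := by
  refine (M.isRkFinite_set X).indep_of_encard_le_eRk ?_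
  rw [← coe_rk, ← hX.cast_ncard_eq]
  exact_mod_cast h

theorem rk_eq_ncard_of_indep (h : M.Indep X) : rk M X = X.ncard := by
  have := coe_rk M X
  rw [h.eRk_eq_encard, ← h.finite.cast_ncard_eq] at this
  exact_mod_cast this

theorem rk_insert_of_mem_closure (h : e ∈ M.closure X) : rk M (insert e X) = rk M X := by
  have : M.eRk (insert e X) = M.eRk X := by
    rw [← M.eRk_closure_eq, closure_insert_eq_of_mem_closure h, M.eRk_closure_eq]
  rw [← coe_rk, ← coe_rk] at this
  exact_mod_cast this

theorem rk_insert_of_notMem_closure (he : e ∈ M.E) (h : e ∉ M.closure X) :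
    rk M (insert e X) = rk M X + 1 := by
  have := eRk_insert_eq_add_one ⟨he, h⟩
  rw [← coe_rk, ← coe_rk] at this
  exact_mod_cast this

theorem nontrivial_of_three_le_rk_of_subset_union (h : 3 ≤ rk M X) (hsub : X ⊆ S ∪ T)
    (hS : S.Subsingleton) : T.Nontrivial := by
  by_contra hT
  have hST := rk_inter_add_rk_union_le M S T
  have hX : rk M X ≤ rk M (S ∪ T) := rk_mono hsub
  have := rk_le_one_of_subsingleton (M := M) hS
  have := rk_le_one_of_subsingleton (M := M) (not_nontrivial_iff.1 hT)
  omega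

theorem sdiff_singleton_nontrivial_of_three_le_rk (h : 3 ≤ rk M X) (e : α) :
    (X \ {e}).Nontrivial :=
  nontrivial_of_three_le_rk_of_subset_union (S := {e}) h (by grind) subsingleton_singleton

theorem rk_contract_add_rk (h : Disjoint X C) :
    rk (contract M C) X + rk M C = rk M (X ∪ C) := by
  obtain ⟨J, hJ⟩ := M.exists_isBasis' C
  obtain ⟨I, hI, hJI⟩ := hJ.indep.subset_isBasis'_of_subset (hJ.subset.trans subset_union_right)
  have hIC : I ∩ C = J := (hJ.eq_of_subset_indep (hI.indep.subset inter_subset_left)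
    (subset_inter hJI hJ.subset) inter_subset_right).symm
  have hB : (M ／ C).IsBasis' (I \ C) ((X ∪ C) \ C) := hI.contract_isBasis' hJ
    (hI.indep.subset (union_subset sdiff_subset hJI))
  rw [union_sdiff_right, h.sdiff_eq_left] at hB
  have hrk : (rk (M ／ C) X + rk M C : ℕ∞) = rk M (X ∪ C) := by
    rw [coe_rk, coe_rk, coe_rk, hB.eRk_eq_encard, hJ.eRk_eq_encard, hI.eRk_eq_encard, ← hIC,
      encard_sdiff_add_encard_inter]
  exact_mod_cast hrk

instance contract_rankFinite : (contract M C).RankFinite :=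
  inferInstanceAs (M ／ C).RankFinite

end Rank

section Connectivity

theorem lam_compl (hX : X ⊆ M.E) : lam M (M.E \ X) = lam M X := by
  rw [lam, lam, sdiff_sdiff_cancel_left hX]
  ring

theorem IsKSeparation.compl (h : IsKSeparation M k X) : IsKSeparation M k (M.E \ X) := by
  obtain ⟨⟨hXE, hlam⟩, hX, hY⟩ := h
  exact ⟨⟨sdiff_subset, (lam_compl hXE).trans_le hlam⟩, hY, by rwa [sdiff_sdiff_cancel_left hXE]⟩

variable [M.RankFinite]

theorem lam_nonneg (hX : X ⊆ M.E) : 0 ≤ lam M X := by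
  have := rk_inter_add_rk_union_le M X (M.E \ X)
  rw [union_sdiff_cancel hX] at this
  rw [lam]
  omega

theorem lam_inter_add_lam_union_le (M : Matroid α) [M.RankFinite] (X Y : Set α) :
    lam M (X ∩ Y) + lam M (X ∪ Y) ≤ lam M X + lam M Y := by
  have h := rk_inter_add_rk_union_le M X Y
  have hc := rk_inter_add_rk_union_le M (M.E \ X) (M.E \ Y)
  rw [← sdiff_inter, sdiff_inter_sdiff] at hc
  simp only [lam]
  omega

theorem lam_eq_lam_sdiff_singleton_add_one (he : e ∈ X) (hcl : e ∈ M.closure (M.E \ X))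
    (hncl : e ∉ M.closure (X \ {e})) : lam M X = lam M (X \ {e}) + 1 := by
  have heE : e ∈ M.E := mem_ground_of_mem_closure hcl
  have hX := rk_insert_of_notMem_closure heE hncl
  have hY := rk_insert_of_mem_closure hcl
  have hins : insert e (M.E \ X) = M.E \ (X \ {e}) := by grind
  rw [insert_sdiff_self_of_mem he] at hX
  rw [hins] at hY
  rw [lam, lam]
  omega

theorem lam_contract (hC : C ⊆ M.E) (hX : X ⊆ M.E \ C) :
    lam (contract M C) X = lam M X + rk M (X ∪ C) - rk M X - rk M C := by
  have hE : (contract M C).E = M.E \ C := rfl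
  have hdisj : Disjoint X C := disjoint_sdiff_left.mono_left hX
  have h₁ := rk_contract_add_rk (M := M) hdisj
  have h₂ := rk_contract_add_rk (M := M) (X := (M.E \ C) \ X) (C := C)
    (disjoint_sdiff_left.mono_left sdiff_subset)
  have h₃ := rk_contract_add_rk (M := M) (X := M.E \ C) (C := C) disjoint_sdiff_left
  have hun : (M.E \ C) \ X ∪ C = M.E \ X := by grind
  rw [hun] at h₂
  rw [sdiff_union_of_subset hC] at h₃
  rw [lam, lam, hE]
  omega

theorem lam_le_lam_contract_singleton_add_one (hz : z ∈ M.E) (hX : X ⊆ M.E \ {z}) :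
    lam M X ≤ lam (contract M {z}) X + 1 := by
  have hcon := lam_contract (singleton_subset_iff.2 hz) hX
  have hmono : rk M X ≤ rk M (X ∪ {z}) := rk_mono subset_union_left
  have hone := rk_le_one_of_subsingleton (M := M) (subsingleton_singleton (a := z))
  omega

theorem mem_closure_of_lam_contract_singleton_lt (hz : z ∈ M.E) (hX : X ⊆ M.E \ {z})
    (hlt : lam (contract M {z}) X < lam M X) : z ∈ M.closure X := by
  by_contra hncl
  have hcon := lam_contract (singleton_subset_iff.2 hz) hX
  have hins := rk_insert_of_notMem_closure hz hncl
  have hone := rk_le_one_of_subsingleton (M := M) (subsingleton_singleton (a := z))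
  rw [union_singleton] at hcon
  omega

theorem lam_insert_le_of_mem_closure (he : e ∈ M.closure X) : lam M (insert e X) ≤ lam M X := by
  have hX := rk_insert_of_mem_closure he
  have hc : rk M (M.E \ insert e X) ≤ rk M (M.E \ X) :=
    rk_mono (sdiff_subset_sdiff_right (subset_insert e X))
  rw [lam, lam]
  omega

theorem Connected.exists_isKSeparation_two (hM : Connected M) (h : ¬ ThreeConnected M) :
    ∃ X, IsKSeparation M 2 X := by
  simp only [ThreeConnected, not_forall, not_not] at h
  obtain ⟨k, hk, X, hX⟩ := h
  interval_cases k
  · have := lam_nonneg hX.1.1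
    have := hX.1.2
    push_cast at this
    omega
  · exact (hM X hX).elim
  · exact ⟨X, hX⟩

end Connectivity

section Circuit

theorem circuit_iff_isCircuit : Circuit M C ↔ M.IsCircuit C := by
  rw [isCircuit_iff_forall_ssubset, Dep, Circuit]
  tauto

theorem Cocircuit.notMem_closure (hC : Cocircuit M C) (he : e ∈ C) (hX : Disjoint X C) :
    e ∉ M.closure X := by
  intro hcl
  obtain ⟨K, hKX, hK, heK⟩ := exists_isCircuit_of_mem_closure hcl (hX.notMem_of_mem_right he)
  refine hK.inter_isCocircuit_ne_singleton (e := e) (circuit_iff_isCircuit.1 hC) ?_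
  grind

theorem Cocircuit.notMem_closure_sdiff_singleton (hC : Cocircuit M C) (h : X ∩ C = {e}) :
    e ∉ M.closure (X \ {e}) :=
  hC.notMem_closure (h.superset rfl).2 (by grind)

theorem Cocircuit.nontrivial_inter_of_triangle (hC : Cocircuit M C) (hT : Triangle M T)
    (heT : e ∈ T) (heC : e ∈ C) : (T ∩ C).Nontrivial :=
  (circuit_iff_isCircuit.1 hT.1).isCocircuit_inter_nontrivial (circuit_iff_isCircuit.1 hC)
    ⟨e, heT, heC⟩

theorem Triangle.mem_closure_sdiff_singleton (hT : Triangle M T) (he : e ∈ T) :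
    e ∈ M.closure (T \ {e}) :=
  (circuit_iff_isCircuit.1 hT.1).mem_closure_sdiff_singleton_of_mem he

end Circuit

section ThreeConnected

variable [M.Finite]

theorem nontrivial_iff_two_le_ncard (hX : X ⊆ M.E) : X.Nontrivial ↔ 2 ≤ X.ncard := by
  have := one_lt_ncard_iff_nontrivial_and_finite (s := X)
  have := M.ground_finite.subset hX
  tauto

theorem ThreeConnected.two_le_lam (hM : ThreeConnected M) (hX : X ⊆ M.E) (hnt : X.Nontrivial)
    (hnt' : (M.E \ X).Nontrivial) : 2 ≤ lam M X := by
  by_contra hlam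
  exact hM 2 (by norm_num) X ⟨⟨hX, by push_cast; omega⟩, (nontrivial_iff_two_le_ncard hX).1 hnt,
    (nontrivial_iff_two_le_ncard sdiff_subset).1 hnt'⟩

theorem ThreeConnected.mem_closure_sdiff_singleton (hM : ThreeConnected M) (hX : X ⊆ M.E)
    (hlam : lam M X ≤ 2) (he : e ∈ X) (hnt : (X \ {e}).Nontrivial) (hnt' : (M.E \ X).Nontrivial)
    (hcl : e ∈ M.closure (M.E \ X)) : e ∈ M.closure (X \ {e}) := by
  by_contra hncl
  have hlam' := hM.two_le_lam (sdiff_subset.trans hX) hnt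
    (hnt'.mono (sdiff_subset_sdiff_right sdiff_subset))
  have := lam_eq_lam_sdiff_singleton_add_one he hcl hncl
  omega

theorem ThreeConnected.indep_pair (hM : ThreeConnected M) (h4 : 4 ≤ M.E.ncard) (he : e ∈ M.E)
    (hf : f ∈ M.E) (hef : e ≠ f) : M.Indep {e, f} := by
  have hsub : ({e, f} : Set α) ⊆ M.E := pair_subset he hf
  have hcard := ncard_sdiff_add_ncard_of_subset hsub M.ground_finite
  rw [ncard_pair hef] at hcard
  have hlam := hM.two_le_lam hsub (nontrivial_pair hef)
    ((nontrivial_iff_two_le_ncard sdiff_subset).2 (by omega))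
  have hle : rk M (M.E \ {e, f}) ≤ rk M M.E := rk_mono sdiff_subset
  rw [lam] at hlam
  exact indep_of_ncard_le_rk (toFinite _) (by rw [ncard_pair hef]; omega)

theorem ThreeConnected.notMem_closure_singleton (hM : ThreeConnected M) (h4 : 4 ≤ M.E.ncard)
    (he : e ∈ M.E) (hf : f ∈ M.E) (hef : e ≠ f) : e ∉ M.closure {f} := by
  have := (hM.indep_pair h4 he hf hef).notMem_closure_sdiff_of_mem (mem_insert e {f})
  rwa [pair_sdiff_left hef] at this

theorem ThreeConnected.triangle_of_mem_closure_pair (hM : ThreeConnected M) (h4 : 4 ≤ M.E.ncard)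
    (he : e ∈ M.E) (hf : f ∈ M.E) (hze : z ≠ e) (hzf : z ≠ f) (hef : e ≠ f)
    (hz : z ∈ M.closure {e, f}) : Triangle M {z, e, f} := by
  have hzE : z ∈ M.E := mem_ground_of_mem_closure hz
  have hcirc : M.IsCircuit {z, e, f} := by
    refine (hM.indep_pair h4 he hf hef).insert_isCircuit_of_forall_of_nontrivial
      (nontrivial_pair hef) hz ?_
    rintro x (rfl | rfl)
    · rw [pair_sdiff_left hef]
      exact hM.notMem_closure_singleton h4 hzE hf hzf
    · rw [pair_sdiff_right hef]
      exact hM.notMem_closure_singleton h4 hzE he hze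
  exact ⟨circuit_iff_isCircuit.2 hcirc, ncard_eq_three.2 ⟨z, e, f, hze, hzf, hef, rfl⟩⟩

theorem ThreeConnected.three_le_rk_of_forall_triangle_notMem (hM : ThreeConnected M)
    (h4 : 4 ≤ M.E.ncard) (hz : ∀ T, Triangle M T → z ∉ T) (hX : X ⊆ M.E) (hnt : X.Nontrivial)
    (hzX : z ∉ X) (hcl : z ∈ M.closure X) : 3 ≤ rk M X := by
  obtain ⟨e, he, f, hf, hef⟩ := hnt
  have hrk : rk M {e, f} = 2 := by
    rw [rk_eq_ncard_of_indep (hM.indep_pair h4 (hX he) (hX hf) hef), ncard_pair hef]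
  by_contra! hlt
  have hspan : X ⊆ M.closure {e, f} := by
    intro x hx
    by_contra hxcl
    have hins := rk_insert_of_notMem_closure (hX hx) hxcl
    have hle : rk M (insert x {e, f}) ≤ rk M X := rk_mono (by grind)
    omega
  refine hz _ (hM.triangle_of_mem_closure_pair h4 (hX he) (hX hf) (ne_of_mem_of_not_mem he hzX).symm
    (ne_of_mem_of_not_mem hf hzX).symm hef ?_) (mem_insert z _)
  exact M.closure_subset_closure_of_subset_closure hspan hcl

theorem ThreeConnected.connected_contract_singleton (hM : ThreeConnected M) (h4 : 4 ≤ M.E.ncard)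
    (hz : z ∈ M.E) : Connected (contract M {z}) := by
  intro X hsep
  have hE : (contract M {z}).E = M.E \ {z} := rfl
  have hfin : (M.E \ {z}).Finite := M.ground_finite.sdiff
  wlog hnt : X.Nontrivial generalizing X
  · refine this _ hsep.compl ?_
    have hsum := ncard_sdiff_add_ncard_of_subset hsep.1.1 hfin
    have hEz := ncard_sdiff_singleton_add_one hz M.ground_finite
    have hX : ¬ 2 ≤ X.ncard :=
      hnt ∘ (nontrivial_iff_two_le_ncard (hsep.1.1.trans sdiff_subset)).2
    rw [hE] at hsum ⊢
    refine (nontrivial_iff_two_le_ncard (M := M) (sdiff_subset.trans sdiff_subset)).2 ?_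
    omega
  obtain ⟨⟨hX, hlam⟩, -, hcompl⟩ := hsep
  obtain ⟨w, hw⟩ := nonempty_of_ncard_ne_zero (Nat.one_le_iff_ne_zero.1 hcompl)
  rw [hE] at hw
  have hlamM := hM.two_le_lam (hX.trans sdiff_subset) hnt ⟨w, by grind, z, by grind, by grind⟩
  have hle := lam_le_lam_contract_singleton_add_one hz hX
  push_cast at hlam
  omega

theorem ThreeConnected.mem_closure_of_isKSeparation_contract_singleton (hM : ThreeConnected M)
    (hz : z ∈ M.E) (hsep : IsKSeparation (contract M {z}) 2 X) : z ∈ M.closure X := by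
  obtain ⟨⟨hX, hlam⟩, hX2, hY2⟩ := hsep
  refine mem_closure_of_lam_contract_singleton_lt hz hX ?_
  have hXE : X ⊆ M.E := hX.trans sdiff_subset
  have hYE : (contract M {z}).E \ X ⊆ M.E \ X := sdiff_subset_sdiff_left sdiff_subset
  have hlamM := hM.two_le_lam hXE ((nontrivial_iff_two_le_ncard hXE).2 hX2)
    (((nontrivial_iff_two_le_ncard (hYE.trans sdiff_subset)).2 hY2).mono hYE)
  push_cast at hlam
  omega

end ThreeConnected

section VertThreeSep

namespace VertThreeSep

theorem compl_insert_eq (h : VertThreeSep M X z Y) : M.E \ insert z X = Y := by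
  obtain ⟨hE, hdisj, -, hzY, -⟩ := h
  grind

theorem compl_eq (h : VertThreeSep M X z Y) : M.E \ X = insert z Y := by
  obtain ⟨hE, hdisj, hzX, -⟩ := h
  grind

theorem symm (h : VertThreeSep M X z Y) : VertThreeSep M Y z X := by
  have hcompl := h.compl_eq
  have hcompl' := h.compl_insert_eq
  obtain ⟨hE, hdisj, hzX, hzY, hXz, hrXz, hrY, hsX, hrX, hrYz, hclX, hclY⟩ := h
  have h₁ := hXz.compl
  have h₂ := hsX.compl
  rw [union_singleton, hcompl'] at h₁
  rw [hcompl, ← union_singleton] at h₂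
  exact ⟨by rw [← hE]; ac_rfl, hdisj.symm, hzY, hzX, h₂, hrYz, hrX, h₁, hrY, hrXz, hclY, hclX⟩

theorem subset_ground (h : VertThreeSep M X z Y) : X ⊆ M.E :=
  h.2.2.2.2.2.2.2.1.1.1

theorem mem_ground (h : VertThreeSep M X z Y) : z ∈ M.E := by
  simp [← h.1]

theorem lam_le (h : VertThreeSep M X z Y) : lam M X ≤ 2 :=
  h.2.2.2.2.2.2.2.1.1.2

theorem lam_insert_le (h : VertThreeSep M X z Y) : lam M (insert z X) ≤ 2 := by
  rw [← union_singleton]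
  exact h.2.2.2.2.1.1.2

theorem disjoint (h : VertThreeSep M X z Y) : Disjoint X Y :=
  h.2.1

theorem notMem_left (h : VertThreeSep M X z Y) : z ∉ X :=
  h.2.2.1

theorem mem_or_eq_or_mem (h : VertThreeSep M X z Y) (he : e ∈ M.E) : e ∈ X ∨ e = z ∨ e ∈ Y := by
  have := h.1
  grind

theorem mem_closure_left (h : VertThreeSep M X z Y) : z ∈ M.closure X :=
  h.2.2.2.2.2.2.2.2.2.2.1

theorem three_le_rk_left (h : VertThreeSep M X z Y) : 3 ≤ rk M X :=
  h.2.2.2.2.2.2.2.2.1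

variable [M.Finite]

theorem of_lam_le (hX : X ⊆ M.E) (hzX : z ∉ X) (hlam : lam M X ≤ 2) (hrX : 3 ≤ rk M X)
    (hrY : 3 ≤ rk M (M.E \ insert z X)) (hclX : z ∈ M.closure X)
    (hclY : z ∈ M.closure (M.E \ insert z X)) : VertThreeSep M X z (M.E \ insert z X) := by
  have hz : z ∈ M.E := mem_ground_of_mem_closure hclX
  have hlam' : lam M (insert z X) ≤ 2 := (lam_insert_le_of_mem_closure hclX).trans hlam
  have hXz : X ⊆ X ∪ {z} := subset_union_left
  have hYz : M.E \ insert z X ∪ {z} = M.E \ X := by grind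
  have hY : M.E \ insert z X ⊆ M.E \ X := hYz ▸ subset_union_left
  have hcard {S : Set α} (hS : S ⊆ M.E) (hr : 3 ≤ rk M S) : 3 ≤ S.ncard :=
    hr.trans (rk_le_ncard (M.ground_finite.subset hS))
  have hrXz := hrX.trans (rk_mono hXz)
  have hrYz := hrY.trans (rk_mono hY)
  refine ⟨by grind, by grind, hzX, by grind, ⟨⟨by grind, ?_⟩, ?_, ?_⟩, hrXz, hrY,
    ⟨⟨hX, ?_⟩, hcard hX hrX, hcard sdiff_subset hrYz⟩, hrX, hYz ▸ hrYz, hclX, hclY⟩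
  · rw [union_singleton]; exact hlam'
  · exact hcard (by grind) hrXz
  · rw [union_singleton]; exact hcard sdiff_subset hrY
  · exact hlam

theorem four_le_ncard_ground (h : VertThreeSep M X z Y) : 4 ≤ M.E.ncard := by
  have hsum := ncard_sdiff_add_ncard_of_subset h.subset_ground M.ground_finite
  obtain ⟨-, -, -, -, -, -, -, ⟨-, hX, hXc⟩, -⟩ := h
  omega

theorem nontrivial_left (h : VertThreeSep M X z Y) : X.Nontrivial :=
  (sdiff_singleton_nontrivial_of_three_le_rk h.three_le_rk_left z).mono sdiff_subset

theorem mem_closure_sdiff_singleton (h : VertThreeSep M X z Y) (hM : ThreeConnected M)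
    (he : e ∈ X) (hcl : e ∈ M.closure (M.E \ X)) : e ∈ M.closure (X \ {e}) := by
  refine hM.mem_closure_sdiff_singleton h.subset_ground h.lam_le he
    (sdiff_singleton_nontrivial_of_three_le_rk h.three_le_rk_left e) ?_ hcl
  rw [h.compl_eq]
  exact h.symm.nontrivial_left.mono (subset_insert z Y)

theorem insert_sdiff (h : VertThreeSep M X z Y) (hM : ThreeConnected M) (hd : d ∈ Y)
    (hcl : d ∈ M.closure X) : VertThreeSep M (insert d X) z (Y \ {d}) := by
  have hX : X ⊆ M.E \ Y := by
    rw [h.symm.compl_eq]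
    exact subset_insert z X
  have hdY : d ∈ M.closure (Y \ {d}) :=
    h.symm.mem_closure_sdiff_singleton hM hd (M.closure_subset_closure hX hcl)
  have hrY : rk M (Y \ {d}) = rk M Y := by
    rw [← rk_insert_of_mem_closure hdY, insert_sdiff_self_of_mem hd]
  have hcompl : M.E \ insert z (insert d X) = Y \ {d} := by
    rw [← h.compl_insert_eq]
    grind
  rw [← hcompl] at hrY ⊢
  refine of_lam_le (insert_subset (h.symm.subset_ground hd) h.subset_ground) ?_
    ((lam_insert_le_of_mem_closure hcl).trans h.lam_le)
    (h.three_le_rk_left.trans (rk_mono (subset_insert d X)))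
    (h.symm.three_le_rk_left.trans_eq hrY.symm)
    (M.closure_subset_closure (subset_insert d X) h.mem_closure_left) ?_
  · have := h.notMem_left
    have := h.symm.notMem_left
    grind
  · rw [hcompl, closure_sdiff_singleton_eq_closure hdY]
    exact h.symm.mem_closure_left

theorem inter_subsingleton (h : VertThreeSep M X z Y) (hM : ThreeConnected M) (hP : P ⊆ M.E)
    (hlam : lam M P ≤ 2) (hzP : z ∈ P) (hzcl : z ∉ M.closure (P \ {z}))
    (hnt : (M.E \ (P ∪ X)).Nontrivial) : (P ∩ X).Subsingleton := by
  by_contra hPX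
  rw [not_subsingleton_iff] at hPX
  have hXP : insert z X ⊆ M.E := insert_subset h.mem_ground h.subset_ground
  have hunion : 2 ≤ lam M (P ∪ insert z X) := by
    refine hM.two_le_lam (union_subset hP hXP) (hPX.mono (by grind)) ?_
    rwa [union_insert, insert_eq_of_mem (.inl hzP)]
  have hsub := lam_inter_add_lam_union_le M P (insert z X)
  have hlamX := h.lam_insert_le
  have hYsub : Y ⊆ M.E \ (P ∩ insert z X) := by
    rw [← h.compl_insert_eq]
    exact sdiff_subset_sdiff_right inter_subset_right
  have hsdiff : (P ∩ insert z X) \ {z} = P ∩ X := by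
    have := h.notMem_left
    grind
  have hmem := hM.mem_closure_sdiff_singleton (inter_subset_left.trans hP)
    (show lam M (P ∩ insert z X) ≤ 2 by omega) ⟨hzP, mem_insert z X⟩ (by rwa [hsdiff])
    (h.symm.nontrivial_left.mono hYsub)
    (M.closure_subset_closure hYsub h.symm.mem_closure_left)
  rw [hsdiff] at hmem
  refine hzcl (M.closure_subset_closure ?_ hmem)
  have := h.notMem_left
  grind

theorem inter_subsingleton_of_crossing (h : VertThreeSep M X a Y) (h' : VertThreeSep M X' b Y')
    (hM : ThreeConnected M) (hb : b ∈ X) (ha : a ∈ Y') (hbcl : b ∉ M.closure (X \ {b})) :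
    (X ∩ X').Subsingleton ∧ (X ∩ Y').Subsingleton := by
  have hdisj := disjoint_left.1 h.disjoint
  have hX'cover := fun x (hx : x ∈ X') ↦ h.mem_or_eq_or_mem (h'.subset_ground hx)
  have hY'cover := fun x (hx : x ∈ Y') ↦ h.mem_or_eq_or_mem (h'.symm.subset_ground hx)
  have haX' := disjoint_right.1 h'.disjoint ha
  have hXY' (hnt : (X' ∩ Y).Nontrivial) : (X ∩ Y').Subsingleton := by
    refine h'.symm.inter_subsingleton hM h.subset_ground h.lam_le hb hbcl (hnt.mono ?_)
    have := disjoint_left.1 h'.disjoint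
    have := h.symm.subset_ground
    grind
  obtain ⟨y, hy, hyY'⟩ : (Y ∩ Y').Nonempty := by
    by_contra! hempty
    rw [← disjoint_iff_inter_eq_empty, disjoint_left] at hempty
    have hYcover := fun y (hy : y ∈ Y) ↦ h'.mem_or_eq_or_mem (h.symm.subset_ground hy)
    have hYX' : Y ⊆ X' ∩ Y := by grind
    have := nontrivial_of_three_le_rk_of_subset_union (T := {a}) h'.symm.three_le_rk_left (by grind)
      (hXY' (h.symm.nontrivial_left.mono hYX'))
    exact not_nontrivial_singleton this
  have hXX' : (X ∩ X').Subsingleton := by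
    refine h'.inter_subsingleton hM h.subset_ground h.lam_le hb hbcl ⟨a, ?_, y, ?_, ?_⟩
    · exact ⟨h.mem_ground, by simp [h.notMem_left, haX']⟩
    · exact ⟨h.symm.subset_ground hy, by
        simp [disjoint_right.1 h.disjoint hy, disjoint_right.1 h'.disjoint hyY']⟩
    · rintro rfl
      exact h.symm.notMem_left hy
  exact ⟨hXX', hXY' <|
    nontrivial_of_three_le_rk_of_subset_union h'.three_le_rk_left (by grind) hXX'⟩

theorem exists_eq_of_crossing (h : VertThreeSep M X a Y) (h' : VertThreeSep M X' b Y')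
    (hM : ThreeConnected M) (hb : b ∈ X) (ha : a ∈ Y') (hbcl : b ∉ M.closure (X \ {b})) :
    ∃ p ∈ X', ∃ q ∈ Y', X = {b, p, q} := by
  obtain ⟨hX', hY'⟩ := h.inter_subsingleton_of_crossing h' hM hb ha hbcl
  have hcover := fun x (hx : x ∈ X) ↦ h'.mem_or_eq_or_mem (h.subset_ground hx)
  obtain ⟨p, hp, hpb⟩ := (nontrivial_of_three_le_rk_of_subset_union (T := insert b (X ∩ X'))
    h.three_le_rk_left (by grind) hY').exists_ne b
  obtain ⟨q, hq, hqb⟩ := (nontrivial_of_three_le_rk_of_subset_union (T := insert b (X ∩ Y'))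
    h.three_le_rk_left (by grind) hX').exists_ne b
  have hpX : p ∈ X ∩ X' := hp.resolve_left hpb
  have hqX : q ∈ X ∩ Y' := hq.resolve_left hqb
  refine ⟨p, hpX.2, q, hqX.2, subset_antisymm (fun x hx ↦ ?_) (by grind)⟩
  rcases hcover x hx with hxX' | rfl | hxY'
  · simp [hX' ⟨hx, hxX'⟩ hpX]
  · simp
  · simp [hY' ⟨hx, hxY'⟩ hqX]

theorem mem_closure_sdiff_singleton_of_crossing (h : VertThreeSep M X a Y)
    (h' : VertThreeSep M X' b Y') (hM : ThreeConnected M) (hb : b ∈ X) (ha : a ∈ Y')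
    (hatri : ∀ T, Triangle M T → a ∉ T) : b ∈ M.closure (X \ {b}) := by
  by_contra hbcl
  obtain ⟨p, hp, q, hq, rfl⟩ := h.exists_eq_of_crossing h' hM hb ha hbcl
  have haX := h.notMem_left
  have hbX' := h'.notMem_left
  have hbY' := h'.symm.notMem_left
  have hqX' := disjoint_right.1 h'.disjoint hq
  have hbq : a ∉ M.closure {b, q} := fun hcl ↦
    hatri _ (hM.triangle_of_mem_closure_pair h.four_le_ncard_ground h'.mem_ground
      (h'.symm.subset_ground hq) (by grind) (by grind) (by grind) hcl) (mem_insert a _)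
  have hpcl : p ∈ M.closure {a, b, q} := by
    refine mem_closure_insert hbq ?_
    rw [insert_comm]
    exact h.mem_closure_left
  have hpY' : p ∈ M.closure Y' := by
    refine M.closure_subset_closure_of_subset_closure ?_ hpcl
    have hY' := M.subset_closure Y' h'.symm.subset_ground
    rintro x (rfl | rfl | rfl)
    exacts [hY' ha, h'.symm.mem_closure_left, hY' hq]
  have hpX' : p ∈ M.closure (X' \ {p}) := h'.mem_closure_sdiff_singleton hM hp <|
    M.closure_subset_closure (by rw [h'.compl_eq]; exact subset_insert b Y') hpY'
  have hbX'p : b ∈ M.closure (X' \ {p}) := by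
    rw [closure_sdiff_singleton_eq_closure hpX']
    exact h'.mem_closure_left
  refine hbcl (h.mem_closure_sdiff_singleton hM hb (M.closure_subset_closure ?_ hbX'p))
  have := h'.subset_ground
  grind

end VertThreeSep

theorem ThreeConnected.exists_vertThreeSep [M.Finite] (hM : ThreeConnected M)
    (h4 : 4 ≤ M.E.ncard) (hzE : z ∈ M.E) (hz : ∀ T, Triangle M T → z ∉ T)
    (hcon : ¬ ThreeConnected (contract M {z})) : ∃ X Y, VertThreeSep M X z Y := by
  have hE : (contract M {z}).E = M.E \ {z} := rfl
  obtain ⟨X, hsep⟩ := (hM.connected_contract_singleton h4 hzE).exists_isKSeparation_two hcon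
  have hside {S : Set α} (hS : IsKSeparation (contract M {z}) 2 S) :
      z ∈ M.closure S ∧ 3 ≤ rk M S := by
    have hSE : S ⊆ M.E := hS.1.1.trans sdiff_subset
    have hcl := hM.mem_closure_of_isKSeparation_contract_singleton hzE hS
    have hzS : z ∉ S := fun hzS ↦ (hS.1.1 hzS).2 rfl
    exact ⟨hcl, hM.three_le_rk_of_forall_triangle_notMem h4 hz hSE
      ((nontrivial_iff_two_le_ncard hSE).2 hS.2.1) hzS hcl⟩
  obtain ⟨hclX, hrX⟩ := hside hsep
  obtain ⟨hclY, hrY⟩ := hside hsep.compl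
  have hcompl : (contract M {z}).E \ X = M.E \ insert z X := by
    rw [hE, sdiff_sdiff, singleton_union]
  rw [hcompl] at hclY hrY
  obtain ⟨hX, hlam⟩ := hsep.1
  have hle := lam_le_lam_contract_singleton_add_one hzE hX
  push_cast at hlam
  exact ⟨X, _, .of_lam_le (hX.trans sdiff_subset) (fun hzX ↦ (hX hzX).2 rfl) (by omega) hrX hrY
    hclX hclY⟩

namespace VertThreeSep

variable [M.Finite]

theorem threeConnected_contract (h : VertThreeSep M X a Y) (hM : ThreeConnected M) (hb : b ∈ X)
    (hbcl : b ∉ M.closure (X \ {b})) (ha : ∀ T, Triangle M T → a ∉ T)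
    (hbtri : ∀ T, Triangle M T → b ∉ T) : ThreeConnected (contract M {b}) := by
  by_contra hcon
  obtain ⟨X', Y', h'⟩ :=
    hM.exists_vertThreeSep h.four_le_ncard_ground (h.subset_ground hb) hbtri hcon
  rcases h'.mem_or_eq_or_mem h.mem_ground with haX' | rfl | haY'
  · exact hbcl (h.mem_closure_sdiff_singleton_of_crossing h'.symm hM hb haX' ha)
  · exact h.notMem_left hb
  · exact hbcl (h.mem_closure_sdiff_singleton_of_crossing h' hM hb haY' ha)

theorem mem_closure_of_triangle (h : VertThreeSep M X a Y) (hM : ThreeConnected M) (hc : c ∈ X)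
    (hccl : c ∉ M.closure (X \ {c})) (hT : Triangle M T) (hcT : c ∈ T) (haT : a ∉ T)
    (hd : d ∈ Y) (hdT : d ∈ T) : d ∈ M.closure X := by
  have hYE : Y ⊆ M.E \ X := by
    rw [h.compl_eq]
    exact subset_insert a Y
  have hcover := fun x (hx : x ∈ T) ↦ h.mem_or_eq_or_mem (hT.1.1 hx)
  obtain ⟨e, ⟨heT, hec⟩, heY⟩ : ∃ e ∈ T \ {c}, e ∉ Y := by
    by_contra! hsub
    exact hccl (h.mem_closure_sdiff_singleton hM hc
      (M.closure_subset_closure (subset_trans hsub hYE) (hT.mem_closure_sdiff_singleton hcT)))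
  have heX : e ∈ X := by grind
  have hTd : T \ {d} ⊆ X := by
    obtain ⟨x, y, z, -, -, -, rfl⟩ := ncard_eq_three.1 hT.2
    grind
  exact M.closure_subset_closure hTd (hT.mem_closure_sdiff_singleton hdT)

theorem threeConnected_contract_or (h : VertThreeSep M X a Y) (hM : ThreeConnected M)
    (hC : Cocircuit M C) (hX : X ∩ C = {c}) (hY : Y ∩ C = {b, d})
    (ha : ∀ T, Triangle M T → a ∉ T) (hb : ∀ T, Triangle M T → b ∉ T) :
    ThreeConnected (contract M {b}) ∨ ThreeConnected (contract M {c}) := by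
  have hcX : c ∈ X ∩ C := hX.superset rfl
  have hccl := hC.notMem_closure_sdiff_singleton hX
  by_cases hc : ∀ T, Triangle M T → c ∉ T
  · exact .inr (h.threeConnected_contract hM hcX.1 hccl ha hc)
  push Not at hc
  obtain ⟨T, hT, hcT⟩ := hc
  obtain ⟨d', ⟨hdT, hdC⟩, hdc⟩ := (hC.nontrivial_inter_of_triangle hT hcT hcX.2).exists_ne c
  have haT := ha T hT
  have hbT := hb T hT
  have hdX : d' ∉ X := fun hdX ↦ hdc (hX.subset ⟨hdX, hdC⟩)
  have hdY : d' ∈ Y := by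
    have := h.mem_or_eq_or_mem (hT.1.1 hdT)
    grind
  obtain rfl : d' = d := (hY.subset ⟨hdY, hdC⟩).resolve_left (ne_of_mem_of_not_mem hdT hbT)
  have hdcl := h.mem_closure_of_triangle hM hcX.1 hccl hT hcT haT hdY hdT
  have hYb : Y \ {d'} ∩ C = {b} := by grind
  exact .inl ((h.insert_sdiff hM hdY hdcl).symm.threeConnected_contract hM (hYb.superset rfl).1
    (hC.notMem_closure_sdiff_singleton hYb) ha hb)

theorem exists_threeConnected_contract (h : VertThreeSep M X a Y) (hM : ThreeConnected M)
    (hC : Cocircuit M C) (hcard : C.ncard = 4) (haC : a ∈ C) (hbC : b ∈ C) (hbY : b ∈ Y)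
    (ha : ∀ T, Triangle M T → a ∉ T) (hb : ∀ T, Triangle M T → b ∉ T) :
    ∃ c ∈ C, ThreeConnected (contract M {c}) := by
  obtain ⟨c, hcX, hcC⟩ : (X ∩ C).Nonempty := by
    rw [← not_disjoint_iff_nonempty_inter]
    exact fun hdisj ↦ hC.notMem_closure haC hdisj h.mem_closure_left
  by_cases hYb : Y ∩ C = {b}
  · exact ⟨b, hbC, h.symm.threeConnected_contract hM hbY
      (hC.notMem_closure_sdiff_singleton hYb) ha hb⟩
  obtain ⟨d, ⟨hdY, hdC⟩, hdb⟩ : ∃ d ∈ Y ∩ C, d ≠ b := by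
    by_contra! hsub
    exact hYb (subset_antisymm hsub (singleton_subset_iff.2 ⟨hbY, hbC⟩))
  have hdisj := disjoint_left.1 h.disjoint
  have haX := h.notMem_left
  have haY := h.symm.notMem_left
  have hC4 : {a, b, c, d} = C := by
    have hncard : ({a, b, c, d} : Set α).ncard = 4 := by
      rw [ncard_insert_of_notMem (by grind), ncard_insert_of_notMem (by grind),
        ncard_pair (by grind)]
    exact eq_of_subset_of_ncard_le (by grind) (by rw [hcard, hncard])
      (finite_of_ncard_ne_zero (by rw [hcard]; norm_num))
  have hXC : X ∩ C = {c} := by grind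
  have hYC : Y ∩ C = {b, d} := by grind
  rcases h.threeConnected_contract_or hM hC hXC hYC ha hb with hcon | hcon
  exacts [⟨b, hbC, hcon⟩, ⟨c, hcC, hcon⟩]

end VertThreeSep

end VertThreeSep

end NDP

/-- If `C*` is a 4-element cocircuit of a 3-connected matroid
containing two distinct elements neither of which lies in a triangle, then `M/c`
is 3-connected for some `c ∈ C*`. -/
theorem stmt17 (M : Matroid α) [M.Finite] (hM : NDP.ThreeConnected M)
    (C : Set α) (hC : NDP.Cocircuit M C) (hcard : C.ncard = 4)
    (c' c'' : α) (hc' : c' ∈ C) (hc'' : c'' ∈ C) (hne : c' ≠ c'')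
    (ht' : ∀ T, NDP.Triangle M T → c' ∉ T)
    (ht'' : ∀ T, NDP.Triangle M T → c'' ∉ T) :
    ∃ c ∈ C, NDP.ThreeConnected (NDP.contract M {c}) := by
  by_cases hcon : NDP.ThreeConnected (NDP.contract M {c'})
  · exact ⟨c', hc', hcon⟩
  have h4 : 4 ≤ M.E.ncard := hcard ▸ ncard_le_ncard hC.1 M.ground_finite
  obtain ⟨X, Y, h⟩ := hM.exists_vertThreeSep h4 (hC.1 hc') ht' hcon
  wlog hY : c'' ∈ Y generalizing X Y
  · exact this Y X h.symm ((h.mem_or_eq_or_mem (hC.1 hc'')).resolve_right (by tauto))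
  exact h.exists_threeConnected_contract hM hC hcard hc' hc'' hY ht' ht''
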